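/- Let 𝓑 be a real symmetric positive definite 2d×2d matrix and C a real 2d×2d matrix admitting the decomposition C = V Λ Vᵀ𝓑 + V⊥ Λ⊥ V⊥ᵀ𝓑, where V ∈ ℝ^{2d×k} and V⊥ ∈ ℝ^{2d×(2d−k)} satisfy Vᵀ𝓑V = I_k, V⊥ᵀ𝓑V⊥ = I_{2d−k}, V⊥ᵀ𝓑V = 0, Λ = diag(μ₁,…,μ_k) and Λ⊥ = diag(μ_{k+1},…,μ_{2d}) with |μ₁| ≥ … ≥ |μ_k| > |μ_{k+1}| ≥ … ≥ |μ_{2d}|, and suppose |μ_k| = (|λ_k| + √(λ_k² − 4β))/2 and |μ_{k+1}| = √β for reals λ_k and β with 4β < λ_k². Let Ȳ₀, Ȳ₁, …, Ȳ_T ∈ ℝ^{2d×k} satisfy Ȳ_tᵀ𝓑Ȳ_t = I_k with Vᵀ𝓑Ȳ_t invertible for all t, and suppose that for each 0 ≤ t < T there exist G_t, R_t ∈ ℝ^{k×k} invertible with ‖G_t^{−1}‖ ≤ 1, H_t ∈ ℝ^{k×k} invertible, and E_t ∈ ℝ^{2d×k} such that Ȳ_{t+1} = (C Ȳ_t G_t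 + Ξ_t) R_t^{−1} H_t with Ξ_t = E_t (placed appropriately) and ‖Ξ_t‖_𝓑 ≤ ((|μ_k| − √β)/4)·min{ sinθ(Ȳ_t, V), cosθ(Ȳ_t, V) }. Then sin²θ(Ȳ_T, V) ≤ ( 1/2 + √β/(|λ_k| + √(λ_k² − 4β)) )^{2T} · tan²θ(Ȳ₀, V). -/

import Mathlib

open Matrix

/-- The spectral norm (largest singular value) of a real rectangular matrix,
realized as the operator norm of the induced map between Euclidean spaces. -/
noncomputable def specNorm {m n : Type*} [Fintype m] [Fintype n] [DecidableEq n]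
    (M : Matrix m n ℝ) : ℝ :=
  ‖LinearMap.toContinuousLinearMap (Matrix.toEuclideanLin M)‖

/-- The smallest singular value of a square real matrix, realized as the infimum of
`‖Mx‖` over unit vectors `x` of the Euclidean space. -/
noncomputable def sminNorm {k : ℕ} (M : Matrix (Fin k) (Fin k) ℝ) : ℝ :=
  sInf {r : ℝ | ∃ x : EuclideanSpace ℝ (Fin k), ‖x‖ = 1 ∧ r = ‖Matrix.toEuclideanLin M x‖}

/-!
In the basis `(V, U)`, where `U = V⊥`, the map `C` is block diagonal, so one noisy step acts
separately on the cosine block `Vᵀ𝓑Y` and the sine block `Uᵀ𝓑Y`. The bound `tan θ ≤ τ` is encoded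
pointwise, as `‖Uᵀ𝓑Yx‖ ≤ τ ‖Vᵀ𝓑Yx‖` for every `x`: this makes sense without inverting the cosine
block, and is insensitive to a right factor of `Y`. A step expands the right-hand side at least by
`m - ε` and the left-hand side at most by `g + ε`, where `g` and `m` bound the two parts of the
spectrum and `ε` is the relative size of the noise. Noise proportional to `sin θ` is harmless for
the sine block because `sin θ ≤ τ cos θ`.
-/

section Norms

variable {m n : Type*} [Fintype n] [DecidableEq n]

theorem toEuclideanLin_mul_apply {l : Type*} [Fintype l] [DecidableEq l] (M : Matrix m n ℝ)
    (N : Matrix n l ℝ) (x : EuclideanSpace ℝ l) :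
    toEuclideanLin (M * N) x = toEuclideanLin M (toEuclideanLin N x) := by
  rw [toLpLin_mul_same, LinearMap.comp_apply]

variable [Fintype m]

theorem specNorm_nonneg (M : Matrix m n ℝ) : 0 ≤ specNorm M :=
  norm_nonneg _

theorem norm_toEuclideanLin_le (M : Matrix m n ℝ) (x : EuclideanSpace ℝ n) :
    ‖toEuclideanLin M x‖ ≤ specNorm M * ‖x‖ :=
  (LinearMap.toContinuousLinearMap (toEuclideanLin M)).le_opNorm x

theorem specNorm_le_of_forall {M : Matrix m n ℝ} {c : ℝ} (hc : 0 ≤ c)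
    (h : ∀ x, ‖toEuclideanLin M x‖ ≤ c * ‖x‖) : specNorm M ≤ c :=
  ContinuousLinearMap.opNorm_le_bound _ hc h

theorem norm_sq_toEuclideanLin (M : Matrix m n ℝ) (x : EuclideanSpace ℝ n) :
    ‖toEuclideanLin M x‖ ^ 2 = x.ofLp ⬝ᵥ ((Mᵀ * M) *ᵥ x.ofLp) := by
  rw [EuclideanSpace.real_norm_sq_eq, ← mulVec_mulVec, dotProduct_mulVec, vecMul_transpose]
  simp only [toLpLin_apply, dotProduct, sq]

theorem norm_sq_add_norm_sq_of_gram_add_eq {p q : Type*} [Fintype p] [Fintype q]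
    {A : Matrix m n ℝ} {S : Matrix p n ℝ} {N : Matrix q n ℝ} (h : Aᵀ * A + Sᵀ * S = Nᵀ * N)
    (x : EuclideanSpace ℝ n) :
    ‖toEuclideanLin A x‖ ^ 2 + ‖toEuclideanLin S x‖ ^ 2 = ‖toEuclideanLin N x‖ ^ 2 := by
  simp only [norm_sq_toEuclideanLin, ← dotProduct_add, ← add_mulVec, h]

theorem norm_le_norm_toEuclideanLin {G : Matrix n n ℝ} (hG : IsUnit G.det)
    (hGinv : specNorm G⁻¹ ≤ 1) (x : EuclideanSpace ℝ n) : ‖x‖ ≤ ‖toEuclideanLin G x‖ :=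
  calc ‖x‖ = ‖toEuclideanLin G⁻¹ (toEuclideanLin G x)‖ := by
        rw [← toEuclideanLin_mul_apply, nonsing_inv_mul _ hG, toLpLin_one, LinearMap.id_apply]
    _ ≤ specNorm G⁻¹ * ‖toEuclideanLin G x‖ := norm_toEuclideanLin_le _ _
    _ ≤ ‖toEuclideanLin G x‖ := mul_le_of_le_one_left (norm_nonneg _) hGinv

open scoped Matrix.Norms.L2Operator in
theorem specNorm_diagonal_le {ν : n → ℝ} {c : ℝ} (hc : 0 ≤ c) (hν : ∀ i, |ν i| ≤ c) :
    specNorm (diagonal ν) ≤ c :=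
  (l2_opNorm_diagonal ν).trans_le ((pi_norm_le_iff_of_nonneg hc).2 hν)

theorem le_norm_toEuclideanLin_diagonal {μ : n → ℝ} {c : ℝ} (hc : 0 ≤ c) (hμ : ∀ i, c ≤ |μ i|)
    (x : EuclideanSpace ℝ n) : c * ‖x‖ ≤ ‖toEuclideanLin (diagonal μ) x‖ := by
  refine le_of_sq_le_sq ?_ (norm_nonneg _)
  simp only [mul_pow, EuclideanSpace.real_norm_sq_eq, Finset.mul_sum, toLpLin_apply,
    mulVec_diagonal]
  gcongr ∑ _, ?_ * _ with i
  exact sq_le_sq.2 ((abs_of_nonneg hc).trans_le (hμ i))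

theorem norm_sq_add_norm_sq_of_gram_eq_one {p : Type*} [Fintype p] {A : Matrix m n ℝ}
    {S : Matrix p n ℝ} (h : Aᵀ * A + Sᵀ * S = 1) (x : EuclideanSpace ℝ n) :
    ‖toEuclideanLin A x‖ ^ 2 + ‖toEuclideanLin S x‖ ^ 2 = ‖x‖ ^ 2 := by
  simpa using norm_sq_add_norm_sq_of_gram_add_eq (N := (1 : Matrix n n ℝ)) (by simpa using h) x

variable {k : ℕ}

theorem sminNorm_mul_norm_le (M : Matrix (Fin k) (Fin k) ℝ) (x : EuclideanSpace ℝ (Fin k)) :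
    sminNorm M * ‖x‖ ≤ ‖toEuclideanLin M x‖ := by
  rcases eq_or_ne x 0 with rfl | hx
  · simp
  have hmem : sminNorm M ≤ ‖toEuclideanLin M (‖x‖⁻¹ • x)‖ :=
    csInf_le ⟨0, by rintro _ ⟨y, -, rfl⟩; exact norm_nonneg _⟩ ⟨_, norm_smul_inv_norm hx, rfl⟩
  rwa [map_smul, norm_smul, norm_inv, norm_norm, inv_mul_eq_div,
    le_div_iff₀ (norm_pos_iff.2 hx)] at hmem

theorem le_sminNorm_diagonal [NeZero k] {μ : Fin k → ℝ} {c : ℝ} (hc : 0 ≤ c)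
    (hμ : ∀ i, c ≤ |μ i|) : c ≤ sminNorm (diagonal μ) := by
  refine le_csInf ⟨_, EuclideanSpace.single 0 1, by simp, rfl⟩ ?_
  rintro _ ⟨x, hx, rfl⟩
  simpa [hx] using le_norm_toEuclideanLin_diagonal hc hμ x

end Norms

/-- The bound `tan θ ≤ τ` for the angle with cosine block `A` and sine block `S`, stated pointwise
so that `A` need not be invertible. -/
def TanLE {m n p : Type*} [Fintype m] [Fintype n] [DecidableEq n] [Fintype p]
    (A : Matrix m n ℝ) (S : Matrix p n ℝ) (τ : ℝ) : Prop :=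
  ∀ x, ‖toEuclideanLin S x‖ ≤ τ * ‖toEuclideanLin A x‖

namespace TanLE

section Basic

variable {m n p l : Type*} [Fintype m] [Fintype n] [DecidableEq n] [Fintype p] [Fintype l]
  [DecidableEq l] {A : Matrix m n ℝ} {S : Matrix p n ℝ} {τ : ℝ}

theorem of_isUnit_det {A : Matrix n n ℝ} (hA : IsUnit A.det) (S : Matrix p n ℝ) :
    TanLE A S (specNorm (S * A⁻¹)) := fun x => by
  simpa [← toEuclideanLin_mul_apply, Matrix.mul_assoc, nonsing_inv_mul _ hA] using
    norm_toEuclideanLin_le (S * A⁻¹) (toEuclideanLin A x)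

theorem mul_right (h : TanLE A S τ) (K : Matrix n l ℝ) : TanLE (A * K) (S * K) τ := fun x => by
  simpa only [toEuclideanLin_mul_apply] using h (toEuclideanLin K x)

theorem norm_le_sqrt_mul (h : TanLE A S τ) (hAS : Aᵀ * A + Sᵀ * S = 1)
    (x : EuclideanSpace ℝ n) : ‖x‖ ≤ √(1 + τ ^ 2) * ‖toEuclideanLin A x‖ := by
  refine le_of_sq_le_sq ?_ (by positivity)
  calc ‖x‖ ^ 2 = ‖toEuclideanLin A x‖ ^ 2 + ‖toEuclideanLin S x‖ ^ 2 :=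
        (norm_sq_add_norm_sq_of_gram_eq_one hAS x).symm
    _ ≤ ‖toEuclideanLin A x‖ ^ 2 + (τ * ‖toEuclideanLin A x‖) ^ 2 := by gcongr; exact h x
    _ = (√(1 + τ ^ 2) * ‖toEuclideanLin A x‖) ^ 2 := by
        rw [mul_pow √_, Real.sq_sqrt (by positivity)]; ring

theorem sqrt_mul_norm_le (h : TanLE A S τ) (hτ : 0 ≤ τ) (hAS : Aᵀ * A + Sᵀ * S = 1)
    (x : EuclideanSpace ℝ n) : √(1 + τ ^ 2) * ‖toEuclideanLin S x‖ ≤ τ * ‖x‖ := by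
  refine le_of_sq_le_sq ?_ (by positivity)
  calc (√(1 + τ ^ 2) * ‖toEuclideanLin S x‖) ^ 2
      = ‖toEuclideanLin S x‖ ^ 2 + τ ^ 2 * ‖toEuclideanLin S x‖ ^ 2 := by
        rw [mul_pow, Real.sq_sqrt (by positivity)]; ring
    _ ≤ (τ * ‖toEuclideanLin A x‖) ^ 2 + τ ^ 2 * ‖toEuclideanLin S x‖ ^ 2 := by
        gcongr; exact h x
    _ = (τ * ‖x‖) ^ 2 := by
        rw [mul_pow τ, mul_pow τ, ← norm_sq_add_norm_sq_of_gram_eq_one hAS x]; ring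

theorem specNorm_mul_norm_le (h : TanLE A S τ) (hτ : 0 ≤ τ) (hAS : Aᵀ * A + Sᵀ * S = 1)
    (x : EuclideanSpace ℝ n) : specNorm S * ‖x‖ ≤ τ * ‖toEuclideanLin A x‖ := by
  have hsqrt : 0 < √(1 + τ ^ 2) := by positivity
  have hsin : specNorm S ≤ τ / √(1 + τ ^ 2) := specNorm_le_of_forall (by positivity) fun y => by
    rw [div_mul_eq_mul_div, le_div_iff₀' hsqrt]
    exact h.sqrt_mul_norm_le hτ hAS y
  calc specNorm S * ‖x‖ ≤ τ / √(1 + τ ^ 2) * (√(1 + τ ^ 2) * ‖toEuclideanLin A x‖) := by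
        gcongr; exact h.norm_le_sqrt_mul hAS x
    _ = τ * ‖toEuclideanLin A x‖ := by rw [← mul_assoc, div_mul_cancel₀ _ hsqrt.ne']

theorem specNorm_le (h : TanLE A S τ) (hτ : 0 ≤ τ) (hAS : Aᵀ * A + Sᵀ * S = 1) :
    specNorm S ≤ τ :=
  specNorm_le_of_forall hτ fun x => (h x).trans <| by
    gcongr
    refine le_of_sq_le_sq ?_ (norm_nonneg x)
    linarith [norm_sq_add_norm_sq_of_gram_eq_one hAS x, sq_nonneg ‖toEuclideanLin S x‖]

end Basic

theorem noisy_step {p : Type*} [Fintype p] [DecidableEq p] {k : ℕ}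
    {A Λ G P : Matrix (Fin k) (Fin k) ℝ} {S P' : Matrix p (Fin k) ℝ} {Λ' : Matrix p p ℝ}
    {τ m g ε : ℝ} (h : TanLE A S τ) (hτ : 0 ≤ τ) (hAS : Aᵀ * A + Sᵀ * S = 1) (hm : m ≤ sminNorm Λ)
    (hg : specNorm Λ' ≤ g) (hε : 0 ≤ ε) (hεm : ε < m) (hG : IsUnit G.det)
    (hGinv : specNorm G⁻¹ ≤ 1) (hP : specNorm P ≤ ε * sminNorm A)
    (hP' : specNorm P' ≤ ε * specNorm S) :
    TanLE (Λ * A * G + P) (Λ' * S * G + P') ((g + ε) / (m - ε) * τ) := by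
  intro z
  have hg₀ : 0 ≤ g := (specNorm_nonneg Λ').trans hg
  set w := toEuclideanLin G z with hw
  have hzw : ‖z‖ ≤ ‖w‖ := norm_le_norm_toEuclideanLin hG hGinv z
  have noise_cos : ‖toEuclideanLin P z‖ ≤ ε * ‖toEuclideanLin A w‖ :=
    calc ‖toEuclideanLin P z‖ ≤ specNorm P * ‖z‖ := norm_toEuclideanLin_le P z
      _ ≤ ε * sminNorm A * ‖w‖ := by gcongr; exact (specNorm_nonneg P).trans hP
      _ = ε * (sminNorm A * ‖w‖) := mul_assoc _ _ _
      _ ≤ ε * ‖toEuclideanLin A w‖ := by gcongr; exact sminNorm_mul_norm_le A w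
  have noise_sin : ‖toEuclideanLin P' z‖ ≤ ε * (τ * ‖toEuclideanLin A w‖) :=
    calc ‖toEuclideanLin P' z‖ ≤ specNorm P' * ‖z‖ := norm_toEuclideanLin_le P' z
      _ ≤ ε * specNorm S * ‖w‖ := by gcongr; exact (specNorm_nonneg P').trans hP'
      _ = ε * (specNorm S * ‖w‖) := mul_assoc _ _ _
      _ ≤ ε * (τ * ‖toEuclideanLin A w‖) :=
        mul_le_mul_of_nonneg_left (h.specNorm_mul_norm_le hτ hAS w) hε
  have cos_ge : (m - ε) * ‖toEuclideanLin A w‖ ≤ ‖toEuclideanLin (Λ * A * G + P) z‖ := by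
    have hΛ : m * ‖toEuclideanLin A w‖ ≤ ‖toEuclideanLin Λ (toEuclideanLin A w)‖ :=
      (by gcongr : _ ≤ sminNorm Λ * _).trans (sminNorm_mul_norm_le Λ _)
    rw [map_add, LinearMap.add_apply, toEuclideanLin_mul_apply, toEuclideanLin_mul_apply, ← hw]
    linarith [norm_sub_le_norm_add (toEuclideanLin Λ (toEuclideanLin A w)) (toEuclideanLin P z)]
  have sin_le : ‖toEuclideanLin (Λ' * S * G + P') z‖ ≤ (g + ε) * (τ * ‖toEuclideanLin A w‖) := by
    have hΛ' : ‖toEuclideanLin Λ' (toEuclideanLin S w)‖ ≤ g * (τ * ‖toEuclideanLin A w‖) :=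
      (norm_toEuclideanLin_le Λ' _).trans (by gcongr; exact h w)
    rw [map_add, LinearMap.add_apply, toEuclideanLin_mul_apply, toEuclideanLin_mul_apply, ← hw]
    linarith [norm_add_le (toEuclideanLin Λ' (toEuclideanLin S w)) (toEuclideanLin P' z)]
  have hmε : 0 < m - ε := sub_pos.2 hεm
  calc ‖toEuclideanLin (Λ' * S * G + P') z‖ ≤ (g + ε) * (τ * ‖toEuclideanLin A w‖) := sin_le
    _ = (g + ε) / (m - ε) * τ * ((m - ε) * ‖toEuclideanLin A w‖) := by field_simp
    _ ≤ (g + ε) / (m - ε) * τ * ‖toEuclideanLin (Λ * A * G + P) z‖ := by gcongr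

end TanLE

/-- The columns of `V` and of `U` together form a basis orthonormal for the bilinear form `𝓑`, so
that `U` is a choice of `V⊥`. -/
structure IsOrthonormalFrame {n κ κ' : Type*} [Fintype n] [Fintype κ] [Fintype κ']
    [DecidableEq κ] [DecidableEq κ']
    (𝓑 : Matrix n n ℝ) (V : Matrix n κ ℝ) (U : Matrix n κ' ℝ) : Prop where
  card_add_card : Fintype.card κ + Fintype.card κ' = Fintype.card n
  gram_left : Vᵀ * 𝓑 * V = 1
  gram_right : Uᵀ * 𝓑 * U = 1
  orthogonal : Uᵀ * 𝓑 * V = 0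

theorem isSymm_of_transpose_mul_self_eq {n q : Type*} [Fintype q] {Q : Matrix q n ℝ}
    {𝓑 : Matrix n n ℝ} (hQ : Qᵀ * Q = 𝓑) : 𝓑.IsSymm := by
  rw [← hQ, IsSymm, transpose_mul, transpose_transpose]

namespace IsOrthonormalFrame

variable {n κ κ' l q : Type*} [Fintype n] [Fintype κ] [DecidableEq κ] [Fintype κ'] [DecidableEq κ']
  [Fintype q] {𝓑 C : Matrix n n ℝ} {Q : Matrix q n ℝ} {V : Matrix n κ ℝ} {U : Matrix n κ' ℝ}

theorem symm (hF : IsOrthonormalFrame 𝓑 V U) (h𝓑 : 𝓑.IsSymm) : IsOrthonormalFrame 𝓑 U V where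
  card_add_card := by rw [add_comm, hF.card_add_card]
  gram_left := hF.gram_right
  gram_right := hF.gram_left
  orthogonal := by
    simpa [Matrix.mul_assoc, h𝓑.eq] using congrArg transpose hF.orthogonal

theorem mul_transpose_add_mul_transpose_eq_one [DecidableEq n] (hF : IsOrthonormalFrame 𝓑 V U)
    (h𝓑 : 𝓑.IsSymm) : V * (Vᵀ * 𝓑) + U * (Uᵀ * 𝓑) = 1 := by
  have hleft : fromRows (Vᵀ * 𝓑) (Uᵀ * 𝓑) * fromCols V U = 1 := by
    rw [fromRows_mul_fromCols, hF.gram_left, hF.gram_right, hF.orthogonal,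
      (hF.symm h𝓑).orthogonal, fromBlocks_one]
  rw [← fromCols_mul_fromRows]
  exact (mul_eq_one_comm_of_card_eq _ _ _ (by rw [Fintype.card_sum, hF.card_add_card])).1 hleft

theorem gram_add_gram (hF : IsOrthonormalFrame 𝓑 V U) (h𝓑 : 𝓑.IsSymm) (M : Matrix n l ℝ) :
    (Vᵀ * 𝓑 * M)ᵀ * (Vᵀ * 𝓑 * M) + (Uᵀ * 𝓑 * M)ᵀ * (Uᵀ * 𝓑 * M) = Mᵀ * 𝓑 * M := by
  classical
  calc (Vᵀ * 𝓑 * M)ᵀ * (Vᵀ * 𝓑 * M) + (Uᵀ * 𝓑 * M)ᵀ * (Uᵀ * 𝓑 * M)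
      = Mᵀ * 𝓑 * (V * (Vᵀ * 𝓑) + U * (Uᵀ * 𝓑)) * M := by
        simp only [transpose_mul, transpose_transpose, h𝓑.eq, Matrix.mul_add, Matrix.add_mul,
          Matrix.mul_assoc]
    _ = Mᵀ * 𝓑 * M := by
        rw [hF.mul_transpose_add_mul_transpose_eq_one h𝓑, Matrix.mul_one]

theorem specNorm_transpose_mul_le [Fintype l] [DecidableEq l] (hF : IsOrthonormalFrame 𝓑 V U)
    (hQ : Qᵀ * Q = 𝓑) (M : Matrix n l ℝ) : specNorm (Vᵀ * 𝓑 * M) ≤ specNorm (Q * M) := by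
  have h𝓑 : 𝓑.IsSymm := isSymm_of_transpose_mul_self_eq hQ
  have hgram : (Vᵀ * 𝓑 * M)ᵀ * (Vᵀ * 𝓑 * M) + (Uᵀ * 𝓑 * M)ᵀ * (Uᵀ * 𝓑 * M)
      = (Q * M)ᵀ * (Q * M) := by
    rw [hF.gram_add_gram h𝓑, ← hQ, transpose_mul]
    simp only [Matrix.mul_assoc]
  refine specNorm_le_of_forall (specNorm_nonneg _) fun x =>
    le_trans (le_of_sq_le_sq ?_ (norm_nonneg _)) (norm_toEuclideanLin_le (Q * M) x)
  rw [← norm_sq_add_norm_sq_of_gram_add_eq hgram x]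
  exact le_add_of_nonneg_right (sq_nonneg _)

theorem transpose_mul_mul_eq (hF : IsOrthonormalFrame 𝓑 V U) (h𝓑 : 𝓑.IsSymm) {Λ : Matrix κ κ ℝ}
    {Λ' : Matrix κ' κ' ℝ} (hC : C = V * Λ * Vᵀ * 𝓑 + U * Λ' * Uᵀ * 𝓑) :
    Vᵀ * 𝓑 * C = Λ * (Vᵀ * 𝓑) :=
  calc Vᵀ * 𝓑 * C = (Vᵀ * 𝓑 * V) * Λ * (Vᵀ * 𝓑) + (Vᵀ * 𝓑 * U) * Λ' * (Uᵀ * 𝓑) := by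
        rw [hC]; simp only [Matrix.mul_add, Matrix.mul_assoc]
    _ = Λ * (Vᵀ * 𝓑) := by
        rw [hF.gram_left, (hF.symm h𝓑).orthogonal, Matrix.one_mul, Matrix.zero_mul,
          Matrix.zero_mul, add_zero]

theorem tanLE_noisy_step {k : ℕ} {V Y Ξ : Matrix n (Fin k) ℝ} (hF : IsOrthonormalFrame 𝓑 V U)
    (hQ : Qᵀ * Q = 𝓑) {Λ : Matrix (Fin k) (Fin k) ℝ} {Λ' : Matrix κ' κ' ℝ}
    (hC : C = V * Λ * Vᵀ * 𝓑 + U * Λ' * Uᵀ * 𝓑) {m g ε τ : ℝ} (hm : m ≤ sminNorm Λ)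
    (hg : specNorm Λ' ≤ g) (hε : 0 ≤ ε) (hεm : ε < m) (hY : Yᵀ * 𝓑 * Y = 1)
    {G : Matrix (Fin k) (Fin k) ℝ} (hG : IsUnit G.det) (hGinv : specNorm G⁻¹ ≤ 1)
    (hΞ : specNorm (Q * Ξ) ≤ ε * min (specNorm (Uᵀ * 𝓑 * Y)) (sminNorm (Vᵀ * 𝓑 * Y)))
    (hτ : 0 ≤ τ) (h : TanLE (Vᵀ * 𝓑 * Y) (Uᵀ * 𝓑 * Y) τ) (K : Matrix (Fin k) (Fin k) ℝ) :
    TanLE (Vᵀ * 𝓑 * ((C * Y * G + Ξ) * K)) (Uᵀ * 𝓑 * ((C * Y * G + Ξ) * K))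
      ((g + ε) / (m - ε) * τ) := by
  have h𝓑 : 𝓑.IsSymm := isSymm_of_transpose_mul_self_eq hQ
  have hcos : Vᵀ * 𝓑 * (C * Y * G + Ξ) = Λ * (Vᵀ * 𝓑 * Y) * G + Vᵀ * 𝓑 * Ξ := by
    simp only [Matrix.mul_add, ← Matrix.mul_assoc, hF.transpose_mul_mul_eq h𝓑 hC]
  have hsin : Uᵀ * 𝓑 * (C * Y * G + Ξ) = Λ' * (Uᵀ * 𝓑 * Y) * G + Uᵀ * 𝓑 * Ξ := by
    simp only [Matrix.mul_add, ← Matrix.mul_assoc,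
      (hF.symm h𝓑).transpose_mul_mul_eq h𝓑 (hC.trans (add_comm _ _))]
  rw [← Matrix.mul_assoc, ← Matrix.mul_assoc (Uᵀ * 𝓑), hcos, hsin]
  refine (h.noisy_step hτ ((hF.gram_add_gram h𝓑 Y).trans hY) hm hg hε hεm hG hGinv ?_ ?_).mul_right
    K
  · calc specNorm (Vᵀ * 𝓑 * Ξ) ≤ specNorm (Q * Ξ) := hF.specNorm_transpose_mul_le hQ Ξ
      _ ≤ ε * sminNorm (Vᵀ * 𝓑 * Y) := hΞ.trans (by gcongr; exact min_le_right _ _)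
  · calc specNorm (Uᵀ * 𝓑 * Ξ) ≤ specNorm (Q * Ξ) := (hF.symm h𝓑).specNorm_transpose_mul_le hQ Ξ
      _ ≤ ε * specNorm (Uᵀ * 𝓑 * Y) := hΞ.trans (by gcongr; exact min_le_left _ _)

end IsOrthonormalFrame

/-- `‖M‖_𝓑 = specNorm (Q * M)` holds for every factor `Q` of `𝓑`, not only for `𝓑^{1/2}`. -/
theorem topk_napi_convergence_general {n κ' q : Type*} [Fintype n] [Fintype κ'] [DecidableEq κ']
    [Fintype q] {k : ℕ} {𝓑 C : Matrix n n ℝ} {Q : Matrix q n ℝ}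
    {V : Matrix n (Fin k) ℝ} {U : Matrix n κ' ℝ} (hF : IsOrthonormalFrame 𝓑 V U)
    (hQ : Qᵀ * Q = 𝓑) {Λ : Matrix (Fin k) (Fin k) ℝ} {Λ' : Matrix κ' κ' ℝ}
    (hC : C = V * Λ * Vᵀ * 𝓑 + U * Λ' * Uᵀ * 𝓑) {m g ε : ℝ} (hm : m ≤ sminNorm Λ)
    (hg : specNorm Λ' ≤ g) (hε : 0 ≤ ε) (hεm : ε < m) {T : ℕ} {Y : ℕ → Matrix n (Fin k) ℝ}
    (hY : ∀ t ≤ T, (Y t)ᵀ * 𝓑 * Y t = 1) (hY₀ : IsUnit (Vᵀ * 𝓑 * Y 0).det)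
    (hstep : ∀ t < T, ∃ (G K : Matrix (Fin k) (Fin k) ℝ) (Ξ : Matrix n (Fin k) ℝ),
      IsUnit G.det ∧ specNorm G⁻¹ ≤ 1 ∧ Y (t + 1) = (C * Y t * G + Ξ) * K ∧
      specNorm (Q * Ξ) ≤ ε * min (specNorm (Uᵀ * 𝓑 * Y t)) (sminNorm (Vᵀ * 𝓑 * Y t))) :
    specNorm (Uᵀ * 𝓑 * Y T) ≤
      ((g + ε) / (m - ε)) ^ T * specNorm (Uᵀ * 𝓑 * Y 0 * (Vᵀ * 𝓑 * Y 0)⁻¹) := by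
  set τ := specNorm (Uᵀ * 𝓑 * Y 0 * (Vᵀ * 𝓑 * Y 0)⁻¹)
  have hrate : 0 ≤ (g + ε) / (m - ε) :=
    div_nonneg (add_nonneg ((specNorm_nonneg Λ').trans hg) hε) (sub_pos.2 hεm).le
  have hτ (t : ℕ) : 0 ≤ ((g + ε) / (m - ε)) ^ t * τ :=
    mul_nonneg (pow_nonneg hrate t) (specNorm_nonneg _)
  have htan : ∀ t ≤ T, TanLE (Vᵀ * 𝓑 * Y t) (Uᵀ * 𝓑 * Y t) (((g + ε) / (m - ε)) ^ t * τ) := by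
    intro t ht
    induction t with
    | zero => simpa using TanLE.of_isUnit_det hY₀ (Uᵀ * 𝓑 * Y 0)
    | succ t ih =>
      obtain ⟨G, K, Ξ, hG, hGinv, hYsucc, hΞ⟩ := hstep t ht
      rw [hYsucc, pow_succ', mul_assoc]
      exact hF.tanLE_noisy_step hQ hC hm hg hε hεm (hY t (by omega)) hG hGinv hΞ (hτ t)
        (ih (by omega)) K
  have h𝓑 : 𝓑.IsSymm := isSymm_of_transpose_mul_self_eq hQ
  exact (htan T le_rfl).specNorm_le (hτ T) ((hF.gram_add_gram h𝓑 (Y T)).trans (hY T le_rfl))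

theorem quarter_gap_rate_le {m g : ℝ} (hg : 0 ≤ g) (hgm : g < m) :
    (g + (m - g) / 4) / (m - (m - g) / 4) ≤ 1 / 2 + g / (2 * m) := by
  have hm : 0 < m := hg.trans_lt hgm
  rw [show 1 / 2 + g / (2 * m) = (m + g) / (2 * m) by field_simp, div_le_div_iff₀ (by linarith)
    (by positivity)]
  linarith [sq_nonneg (m - g)]

/-- **Theorem 2 (convergence of the top-`k` noisy accelerated power iteration).**
Here `Ssqrt = 𝓑^{1/2}` is the symmetric positive definite square root of `𝓑`, so
`‖M‖_𝓑 = specNorm (Ssqrt * M)`; `cosθ(Ȳ,V) = σ_k(Vᵀ𝓑Ȳ)`, `sinθ(Ȳ,V) = ‖V⊥ᵀ𝓑Ȳ‖`,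
and `tanθ(Ȳ,V) = ‖V⊥ᵀ𝓑Ȳ(Vᵀ𝓑Ȳ)⁻¹‖`.  The moduli satisfy
`|μ_k| = (|λ_k| + √(λ_k² − 4β))/2` and `|μ_{k+1}| = √β` with `4β < λ_k²`.  Iterating
the one-step contraction under the per-iteration error condition yields
`sin²θ(Ȳ_T, V) ≤ (1/2 + √β/(|λ_k| + √(λ_k² − 4β)))^{2T} tan²θ(Ȳ₀, V)`. -/
theorem topk_napi_convergence
    {d k : ℕ} (hk0 : 0 < k) (hk2d : k < 2 * d)
    (𝓑 C Ssqrt : Matrix (Fin (2 * d)) (Fin (2 * d)) ℝ)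
    (h𝓑 : 𝓑.PosDef) (h𝓑sym : 𝓑.IsSymm)
    (hSsqrt : Ssqrt.PosDef) (hSsqrtSym : Ssqrt.IsSymm) (hSsq : Ssqrt * Ssqrt = 𝓑)
    (V : Matrix (Fin (2 * d)) (Fin k) ℝ)
    (Vperp : Matrix (Fin (2 * d)) (Fin (2 * d - k)) ℝ)
    (hV : Vᵀ * 𝓑 * V = 1) (hVperp : Vperpᵀ * 𝓑 * Vperp = 1)
    (hVV : Vperpᵀ * 𝓑 * V = 0)
    (μ : Fin k → ℝ) (ν : Fin (2 * d - k) → ℝ)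
    (hμmono : ∀ i j : Fin k, i ≤ j → |μ j| ≤ |μ i|)
    (hνmono : ∀ i j : Fin (2 * d - k), i ≤ j → |ν j| ≤ |ν i|)
    (hgap : |ν ⟨0, by omega⟩| < |μ ⟨k - 1, by omega⟩|)
    (hC : C = V * Matrix.diagonal μ * Vᵀ * 𝓑 + Vperp * Matrix.diagonal ν * Vperpᵀ * 𝓑)
    (lamk β : ℝ) (hβ : 0 < β) (hβlam : 4 * β < lamk ^ 2)
    (hμk : |μ ⟨k - 1, by omega⟩| = (|lamk| + Real.sqrt (lamk ^ 2 - 4 * β)) / 2)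
    (hνk : |ν ⟨0, by omega⟩| = Real.sqrt β)
    (T : ℕ) (Ybar : ℕ → Matrix (Fin (2 * d)) (Fin k) ℝ)
    (hYbar : ∀ t ≤ T, (Ybar t)ᵀ * 𝓑 * Ybar t = 1 ∧ IsUnit (Vᵀ * 𝓑 * Ybar t).det)
    (hstep : ∀ t < T,
      ∃ (G R H : Matrix (Fin k) (Fin k) ℝ) (Ξ : Matrix (Fin (2 * d)) (Fin k) ℝ),
        IsUnit G.det ∧ specNorm G⁻¹ ≤ 1 ∧ IsUnit R.det ∧ IsUnit H.det ∧
        Ybar (t + 1) = (C * Ybar t * G + Ξ) * R⁻¹ * H ∧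
        specNorm (Ssqrt * Ξ) ≤
          (|μ ⟨k - 1, by omega⟩| - Real.sqrt β) / 4 *
            min (specNorm (Vperpᵀ * 𝓑 * Ybar t)) (sminNorm (Vᵀ * 𝓑 * Ybar t))) :
    specNorm (Vperpᵀ * 𝓑 * Ybar T) ^ 2 ≤
      (1 / 2 + Real.sqrt β / (|lamk| + Real.sqrt (lamk ^ 2 - 4 * β))) ^ (2 * T) *
        specNorm (Vperpᵀ * 𝓑 * Ybar 0 * (Vᵀ * 𝓑 * Ybar 0)⁻¹) ^ 2 := by
  have : NeZero k := ⟨hk0.ne'⟩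
  have hF : IsOrthonormalFrame 𝓑 V Vperp := ⟨by simp; omega, hV, hVperp, hVV⟩
  have hQ : Ssqrtᵀ * Ssqrt = 𝓑 := by rw [hSsqrtSym.eq, hSsq]
  rw [hνk] at hgap
  have hrate : |lamk| + √(lamk ^ 2 - 4 * β) = 2 * |μ ⟨k - 1, by omega⟩| := by rw [hμk]; ring
  rw [hrate]
  set m := |μ ⟨k - 1, by omega⟩|
  have hg : 0 ≤ √β := Real.sqrt_nonneg β
  have hm : m ≤ sminNorm (diagonal μ) :=
    le_sminNorm_diagonal (abs_nonneg _) fun i =>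
      hμmono _ _ (Fin.le_def.2 (Nat.le_sub_one_of_lt i.2))
  have hν : specNorm (diagonal ν) ≤ √β :=
    specNorm_diagonal_le hg fun j => hνk ▸ hνmono _ _ (Fin.le_def.2 (Nat.zero_le j))
  have hsin := topk_napi_convergence_general hF hQ hC hm hν (ε := (m - √β) / 4) (by linarith)
    (by linarith) (fun t ht => (hYbar t ht).1) (hYbar 0 T.zero_le).2 fun t ht => by
      obtain ⟨G, R, H, Ξ, hG, hGinv, -, -, hY, hΞ⟩ := hstep t ht
      exact ⟨G, R⁻¹ * H, Ξ, hG, hGinv, by rw [hY, Matrix.mul_assoc], hΞ⟩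
  rw [mul_comm 2 T, pow_mul, ← mul_pow]
  refine pow_le_pow_left₀ (specNorm_nonneg _) (hsin.trans ?_) 2
  refine mul_le_mul_of_nonneg_right (pow_le_pow_left₀ ?_ (quarter_gap_rate_le hg hgap) T)
    (specNorm_nonneg _)
  exact div_nonneg (by linarith) (by linarith)
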